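/- Let L > 0, let φ ∈ C²([0,1]) satisfy φ′(α) ≤ −c < 0 for some constant c > 0 and φ(0) − φ(1) ≤ L, and let φ̃ ∈ C¹([0,1]). Define E⁰_φ(g) := ∫₀¹ ∫₀¹ ln|sin(π(g(α)−g(β))/L)| dα dβ. Then ε ↦ E⁰_φ(φ + ε φ̃) is differentiable at ε = 0, for every α ∈ (0,1) the principal-value limit lim_{δ→0⁺} ( ∫₀^{α−δ} + ∫_{α+δ}¹ ) (2π/L) · cot(π(φ(α)−φ(β))/L) dβ exists, and (d/dε)|_{ε=0} E⁰_φ(φ + ε φ̃) = ∫₀¹ [ lim_{δ→0⁺} ( ∫₀^{α−δ} + ∫_{α+δ}¹ ) (2π/L) · cot(π(φ(α)−φ(β))/L) dβ ] · φ̃(α) dα. -/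

import Mathlib

open Real Filter Topology MeasureTheory

/-- The step-location interaction energy
`E⁰_φ(g) := ∫₀¹ ∫₀¹ ln|sin(π(g(α)−g(β))/L)| dα dβ`. -/
noncomputable def E0phi (L : ℝ) (g : ℝ → ℝ) : ℝ :=
  ∫ β in (0:ℝ)..1, ∫ α in (0:ℝ)..1, Real.log |Real.sin (π * (g α - g β) / L)|

namespace PVE

/-- restricted Lebesgue measure on the open unit interval -/
noncomputable abbrev mu : Measure ℝ := volume.restrict (Set.Ioo (0:ℝ) 1)

lemma mu_fin : IsFiniteMeasure mu := by
  unfold mu; infer_instance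

lemma int01 (F : ℝ → ℝ) : ∫ x in (0:ℝ)..1, F x = ∫ x, F x ∂mu := by
  rw [intervalIntegral.integral_of_le zero_le_one, integral_Ioc_eq_integral_Ioo]

lemma ae_mem : ∀ᵐ x ∂mu, x ∈ Set.Ioo (0:ℝ) 1 := ae_restrict_mem measurableSet_Ioo

lemma ae_ne (a : ℝ) : ∀ᵐ x ∂mu, x ≠ a := by
  apply ae_restrict_of_ae
  exact Measure.ae_ne volume a

/-- weight -/
noncomputable def sg (x : ℝ) : ℝ := 1 / √(x * (1 - x))

/-- inverse root -/
noncomputable def ir (x : ℝ) : ℝ := 1 / √|x|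

lemma ir_nonneg (x : ℝ) : 0 ≤ ir x := by unfold ir; positivity
lemma sg_nonneg (x : ℝ) : 0 ≤ sg x := by unfold sg; positivity
lemma ir_meas : Measurable ir := by unfold ir; fun_prop
lemma sg_meas : Measurable sg := by unfold sg; fun_prop

lemma ir_int : IntegrableOn ir (Set.Ioo (-1) 1) volume := by
  have h1 : IntegrableOn ir (Set.Ioc 0 1) volume := by
    have h := (intervalIntegral.intervalIntegrable_rpow' (a := 0) (b := 1) (r := -(1/2)) (by norm_num)).1
    refine h.congr_fun ?_ measurableSet_Ioc
    intro x hx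
    have hx0 : 0 < x := hx.1
    simp only [ir]
    rw [abs_of_pos hx0, Real.sqrt_eq_rpow, Real.rpow_neg hx0.le, one_div, one_div]
  have h2 : IntegrableOn ir (Set.Ico (-1) 0) volume := by
    have h3 : IntegrableOn (fun x => ir (-x)) (Set.Ico (-1) 0) volume := by
      have := (Measure.measurePreserving_neg (volume : Measure ℝ)).integrableOn_comp_preimage
        (MeasurableEquiv.neg ℝ).measurableEmbedding (f := ir) (s := Set.Ioc 0 1)
      have h4 := this.2 h1
      simpa [Function.comp_def] using h4
    refine h3.congr_fun (fun x _ => ?_) measurableSet_Ico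
    simp [ir]
  refine ((h2.union h1).union (integrableOn_singleton (f := ir) (x := (0:ℝ)) (hx := by rw [Real.volume_singleton]; simp))).mono_set ?_
  intro x hx
  rcases lt_trichotomy x 0 with h | h | h
  · left; left; exact ⟨hx.1.le, h⟩
  · right; simpa using h
  · left; right; exact ⟨h, hx.2.le⟩

/-- constant -/
noncomputable def J : ℝ := ∫ x in Set.Ioo (-1:ℝ) 1, ir x

lemma J_nonneg : 0 ≤ J := integral_nonneg (fun x => ir_nonneg x)

lemma ir_shift (a : ℝ) (ha : a ∈ Set.Icc (0:ℝ) 1) :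
    Integrable (fun x => ir (x - a)) mu ∧ ∫ x, ir (x - a) ∂mu ≤ J := by
  have hmp := measurePreserving_sub_right (volume : Measure ℝ) a
  have hemb := (MeasurableEquiv.subRight a).measurableEmbedding
  have h1 := hmp.integrableOn_comp_preimage hemb (f := ir) (s := Set.Ioo (-1) 1)
  have h2 := h1.2 ir_int
  have h3 := hmp.setIntegral_preimage_emb hemb ir (Set.Ioo (-1) 1)
  have hsub : Set.Ioo (0:ℝ) 1 ⊆ (fun x => x - a) ⁻¹' Set.Ioo (-1) 1 := by
    intro x hx
    simp only [Set.mem_preimage, Set.mem_Ioo]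
    constructor <;> linarith [hx.1, hx.2, ha.1, ha.2]
  refine ⟨h2.mono_set hsub, ?_⟩
  unfold J
  rw [← h3]
  exact setIntegral_mono_set h2 (ae_of_all _ fun x => ir_nonneg _) hsub.eventuallyLE

lemma sg_le {x : ℝ} (hx : x ∈ Set.Ioo (0:ℝ) 1) : sg x ≤ ir x + ir (x - 1) := by
  obtain ⟨h0, h1⟩ := hx
  have h1' : 0 < 1 - x := by linarith
  unfold sg ir
  rw [abs_of_pos h0, abs_of_neg (by linarith : x - 1 < 0), Real.sqrt_mul h0.le, neg_sub]
  have ha := Real.sqrt_pos.2 h0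
  have hb := Real.sqrt_pos.2 h1'
  rw [div_add_div _ _ ha.ne' hb.ne']
  gcongr
  have e1 := Real.sq_sqrt h0.le
  have e2 := Real.sq_sqrt h1'.le
  nlinarith

lemma sg_int : Integrable sg mu := by
  refine ((ir_shift 0 (by simp)).1.add (ir_shift 1 (by simp)).1).mono' sg_meas.aestronglyMeasurable ?_
  filter_upwards [ae_mem] with x hx
  rw [Real.norm_of_nonneg (sg_nonneg x)]
  simpa using sg_le hx

lemma one_le_sg {x : ℝ} (hx : x ∈ Set.Ioo (0:ℝ) 1) : 1 ≤ sg x := by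
  obtain ⟨h0, h1⟩ := hx
  have h : 0 < x * (1 - x) := mul_pos h0 (by linarith)
  unfold sg
  rw [le_div_iff₀ (Real.sqrt_pos.2 h), one_mul]
  rw [Real.sqrt_le_one]
  nlinarith

lemma abs_log_le {r : ℝ} (hr : 0 < r) : |Real.log r| ≤ 2 * |r - 1| * (1 + 1 / √r) := by
  have hs := Real.sqrt_pos.2 hr
  have hss := Real.sq_sqrt hr.le
  have hsi : 0 < 1 / √r := by positivity
  rcases le_total 1 r with h | h
  · rw [abs_of_nonneg (Real.log_nonneg h), abs_of_nonneg (by linarith)]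
    have := Real.log_le_sub_one_of_pos hr
    nlinarith
  · rw [abs_of_nonpos (Real.log_nonpos hr.le h), abs_of_nonpos (by linarith)]
    have h1 := Real.log_le_sub_one_of_pos hsi
    rw [one_div, Real.log_inv, Real.log_sqrt hr.le] at h1
    have h2 : (√r)⁻¹ - 1 ≤ (1 - r) * (√r)⁻¹ := by
      have : √r ≤ 1 := Real.sqrt_le_one.2 h
      have h3 : √r * (√r)⁻¹ = 1 := mul_inv_cancel₀ hs.ne'
      have h4 : 0 < (√r)⁻¹ := by positivity
      have h5 : r ≤ √r := by nlinarith
      nlinarith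
    rw [one_div]
    nlinarith

lemma abs_log_sub_le {a b : ℝ} (ha : a ≠ 0) (hb : b ≠ 0) :
    abs (Real.log |a| - Real.log |b|) ≤ 2 * |a - b| * (1 / |b| + ir b * ir a) := by
  have ha' := abs_pos.2 ha
  have hb' := abs_pos.2 hb
  rw [← Real.log_div ha'.ne' hb'.ne']
  refine (abs_log_le (div_pos ha' hb')).trans ?_
  have h1 : abs (|a| / |b| - 1) ≤ |a - b| / |b| := by
    rw [div_sub_one hb'.ne', abs_div, abs_abs]
    exact div_le_div_of_nonneg_right (abs_abs_sub_abs_le_abs_sub a b) hb'.le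
  have hA := Real.sqrt_pos.2 ha'
  have hB := Real.sqrt_pos.2 hb'
  have e : 1 / |b| + ir b * ir a = 1 / |b| * (1 + 1 / √(|a| / |b|)) := by
    unfold ir
    rw [Real.sqrt_div' _ hb'.le]
    have := Real.sq_sqrt hb'.le
    field_simp
    linarith
  rw [e]
  calc _ ≤ 2 * (|a - b| / |b|) * (1 + 1 / √(|a| / |b|)) := by gcongr
    _ = _ := by ring

lemma slope_zero {h : ℝ → ℝ} {k : ℝ} (hc : ContinuousOn h (Set.Icc 0 1))
    (hs : ∀ x ∈ Set.Icc (0:ℝ) 1, ∀ y ∈ Set.Icc (0:ℝ) 1, x ≤ y → k * (y - x) ≤ h x - h y) :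
    ∃ a ∈ Set.Icc (0:ℝ) 1, ∀ x ∈ Set.Icc (0:ℝ) 1, k * |x - a| ≤ |h x| := by
  have m0 : (0:ℝ) ∈ Set.Icc (0:ℝ) 1 := by simp
  have m1 : (1:ℝ) ∈ Set.Icc (0:ℝ) 1 := by simp
  by_cases c0 : h 0 ≤ 0
  · refine ⟨0, m0, fun x hx => ?_⟩
    have := hs 0 m0 x hx hx.1
    rw [sub_zero, abs_of_nonneg hx.1]
    linarith [neg_abs_le (h x)]
  by_cases c1 : 0 ≤ h 1
  · refine ⟨1, m1, fun x hx => ?_⟩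
    have := hs x hx 1 m1 hx.2
    rw [abs_sub_comm, abs_of_nonneg (by linarith [hx.2])]
    linarith [le_abs_self (h x)]
  obtain ⟨a, ha, h0⟩ := intermediate_value_Icc' zero_le_one hc (show (0:ℝ) ∈ Set.Icc (h 1) (h 0) from ⟨by linarith, by linarith⟩)
  refine ⟨a, ha, fun x hx => ?_⟩
  rcases le_total x a with hxa | hxa
  · have := hs x hx a ha hxa
    rw [abs_sub_comm, abs_of_nonneg (by linarith)]
    linarith [le_abs_self (h x)]
  · have := hs a ha x hx hxa
    rw [abs_of_nonneg (by linarith)]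
    linarith [neg_abs_le (h x)]

lemma deriv_lip' {F : ℝ → ℝ → ℝ} {F' bound : ℝ → ℝ} {s : Set ℝ} {x₀ : ℝ} {μ : Measure ℝ}
    (hs : s ∈ 𝓝 x₀)
    (hF_meas : ∀ x ∈ s, AEStronglyMeasurable (F x) μ) (hF_int : Integrable (F x₀) μ)
    (hF'_meas : AEStronglyMeasurable F' μ)
    (h_lipsch : ∀ᵐ a ∂μ, ∀ x ∈ s, ‖F x a - F x₀ a‖ ≤ bound a * ‖x - x₀‖)
    (bound_integrable : Integrable (bound : ℝ → ℝ) μ)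
    (h_diff : ∀ᵐ a ∂μ, HasDerivAt (F · a) (F' a) x₀) :
    Integrable F' μ ∧ HasDerivAt (fun x ↦ ∫ a, F x a ∂μ) (∫ a, F' a ∂μ) x₀ := by
  set L : ℝ →L[ℝ] ℝ →L[ℝ] ℝ := ContinuousLinearMap.smulRightL ℝ ℝ ℝ 1
  replace h_diff : ∀ᵐ a ∂μ, HasFDerivAt (F · a) (L (F' a)) x₀ :=
    h_diff.mono fun x hx ↦ hx.hasFDerivAt
  have hm : AEStronglyMeasurable (L ∘ F') μ := L.continuous.comp_aestronglyMeasurable hF'_meas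
  obtain ⟨hF'_int, key⟩ := hasFDerivAt_integral_of_dominated_loc_of_lip'
    hs hF_meas hF_int hm h_lipsch bound_integrable h_diff
  replace hF'_int : Integrable F' μ := by
    rw [← integrable_norm_iff hm] at hF'_int
    rw [← integrable_norm_iff hF'_meas]
    simpa [L, (· ∘ ·)] using! hF'_int
  refine ⟨hF'_int, ?_⟩
  simp_rw [hasDerivAt_iff_hasFDerivAt] at h_diff ⊢
  simpa only [(· ∘ ·), ContinuousLinearMap.integral_comp_comm _ hF'_int] using! key

structure Hyp (f g p : ℝ → ℝ) (c W P : ℝ) : Prop where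
  hf : Continuous f
  hg : Continuous g
  hp : Continuous p
  c0 : 0 < c
  W0 : 0 ≤ W
  P0 : 0 ≤ P
  hs : ∀ x ∈ Set.Icc (0:ℝ) 1, ∀ y ∈ Set.Icc (0:ℝ) 1, x ≤ y → c * (y - x) ≤ f x - f y
  hpi : f 0 - f 1 ≤ π
  hW : ∀ x ∈ Set.Icc (0:ℝ) 1, ∀ y ∈ Set.Icc (0:ℝ) 1, |g x - g y| ≤ W * |x - y|
  hP : ∀ x ∈ Set.Icc (0:ℝ) 1, ∀ y ∈ Set.Icc (0:ℝ) 1, |p x - p y| ≤ P * |x - y|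
  hd : ∀ x ∈ Set.Ioo (0:ℝ) 1, HasDerivAt f (p x) x
  hpc : ∀ x ∈ Set.Icc (0:ℝ) 1, p x ≤ -c

lemma ir_le {k x y : ℝ} (hk : 0 < k) (hy : y ≠ 0) (h : k * |y| ≤ |x|) :
    ir x ≤ (1 / √k) * ir y := by
  unfold ir
  have : 0 < |y| := abs_pos.2 hy
  rw [one_div_mul_one_div, ← Real.sqrt_mul hk.le]
  gcongr

lemma abs_sin_ge {x : ℝ} (hx : |x| ≤ 3 * π / 2) :
    2 / π * |x| ≤ |sin x| ∨ 2 / π * |x - π| ≤ |sin x| ∨ 2 / π * |x + π| ≤ |sin x| := by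
  have hp := Real.pi_pos
  obtain ⟨h1, h2⟩ := abs_le.1 hx
  by_cases c1 : |x| ≤ π / 2
  · left; exact Real.mul_abs_le_abs_sin c1
  right
  rw [not_le, lt_abs] at c1
  rcases c1 with c1 | c1
  · left
    have := Real.mul_abs_le_abs_sin (x := x - π) (abs_le.2 ⟨by linarith, by linarith⟩)
    rwa [Real.sin_sub_pi, abs_neg] at this
  · right
    have := Real.mul_abs_le_abs_sin (x := x + π) (abs_le.2 ⟨by linarith, by linarith⟩)
    rwa [Real.sin_add_pi, abs_neg] at this

namespace Hyp
variable {f g p : ℝ → ℝ} {c W P : ℝ}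

/-- sine constant -/
noncomputable def kap (c : ℝ) : ℝ := 2 / π * c

lemma kap_pos (h : Hyp f g p c W P) : 0 < kap c := by
  have := h.c0; unfold kap; positivity

lemma sin_ge (h : Hyp f g p c W P) {x y : ℝ} (hx : x ∈ Set.Icc (0:ℝ) 1) (hy : y ∈ Set.Icc (0:ℝ) 1) :
    kap c * (|x - y| * (1 - |x - y|)) ≤ |sin (f x - f y)| := by
  wlog hxy : x ≤ y generalizing x y
  · have := this hy hx (by linarith)
    rwa [abs_sub_comm y x, ← neg_sub (f x), Real.sin_neg, abs_neg] at this
  have hp := Real.pi_pos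
  have hc := h.c0
  have e1 := h.hs x hx y hy hxy
  have e2 := h.hs 0 (by simp) x hx hx.1
  have e3 := h.hs y hy 1 (by simp) hy.2
  have e4 := h.hpi
  rw [abs_sub_comm, abs_of_nonneg (by linarith : 0 ≤ y - x)]
  set d := y - x
  have d0 : 0 ≤ d := by simp only [d]; linarith
  have d1 : d ≤ 1 := by simp only [d]; linarith [hx.1, hy.2]
  have hdd : d * (1 - d) ≤ d := by nlinarith
  have hdd' : d * (1 - d) ≤ 1 - d := by nlinarith
  set u := f x - f y
  have hu' : c * (1 - d) ≤ π - u := by simp only [d, u]; nlinarith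
  have hu0 : 0 ≤ u := le_trans (by positivity) e1
  have hupi : u ≤ π := by
    have : 0 ≤ c * (1 - d) := mul_nonneg hc.le (by linarith)
    linarith
  refine le_trans ?_ (le_abs_self _)
  unfold kap
  have h2p : 0 < 2 / π := by positivity
  rcases le_total u (π / 2) with hu | hu
  · refine le_trans ?_ (Real.mul_le_sin hu0 hu)
    rw [mul_assoc]
    gcongr
    exact le_trans (by gcongr) e1
  · rw [← Real.sin_pi_sub]
    refine le_trans ?_ (Real.mul_le_sin (by linarith) (by linarith))
    rw [mul_assoc]
    gcongr
    exact le_trans (by gcongr) hu'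

lemma dd {x y : ℝ} (hx : x ∈ Set.Icc (0:ℝ) 1) (hy : y ∈ Set.Ioo (0:ℝ) 1) :
    |x - y| < 1 ∧ y * (1 - y) ≤ 1 - |x - y| := by
  obtain ⟨a, b⟩ := hx
  obtain ⟨a', b'⟩ := hy
  rcases le_total x y with h | h
  · rw [abs_of_nonpos (by linarith)]
    constructor
    · linarith
    · nlinarith
  · rw [abs_of_nonneg (by linarith)]
    constructor
    · linarith
    · nlinarith

lemma sin_ne (h : Hyp f g p c W P) {x y : ℝ} (hx : x ∈ Set.Icc (0:ℝ) 1) (hy : y ∈ Set.Ioo (0:ℝ) 1)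
    (hne : x ≠ y) : sin (f x - f y) ≠ 0 := by
  have h1 := h.sin_ge hx ⟨hy.1.le, hy.2.le⟩
  have h2 := h.kap_pos
  have h3 := (dd hx hy).1
  have h4 : 0 < |x - y| := abs_pos.2 (sub_ne_zero.2 hne)
  have h5 : 0 < 1 - |x - y| := by linarith
  rw [← abs_pos]
  refine lt_of_lt_of_le ?_ h1
  positivity

/-- perturbed argument -/
noncomputable def U (f g : ℝ → ℝ) (e x y : ℝ) : ℝ := f x - f y + e * (g x - g y)

lemma near (h : Hyp f g p c W P) {e y : ℝ} (he1 : |e| * W ≤ c / 2) (he2 : |e| * W ≤ π / 2)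
    (hy : y ∈ Set.Icc (0:ℝ) 1) :
    ∃ a ∈ Set.Icc (0:ℝ) 1, ∃ b ∈ Set.Icc (0:ℝ) 1, ∃ d ∈ Set.Icc (0:ℝ) 1,
      ∀ x ∈ Set.Icc (0:ℝ) 1, x ≠ a → x ≠ b → x ≠ d → sin (U f g e x y) ≠ 0 ∧
        ir (sin (U f g e x y)) ≤ 1 / √(2 / π * (c / 2)) * (ir (x - a) + ir (x - b) + ir (x - d)) := by
  have hc := h.c0
  have hpi := Real.pi_pos
  have key : ∀ k : ℝ, ∃ a ∈ Set.Icc (0:ℝ) 1, ∀ x ∈ Set.Icc (0:ℝ) 1,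
      c / 2 * |x - a| ≤ |U f g e x y + k| := by
    intro k
    apply slope_zero (h := fun x => U f g e x y + k)
    · have := h.hf; have := h.hg
      unfold U; fun_prop
    · intro x hx z hz hxz
      have e1 := h.hs x hx z hz hxz
      have e2 := h.hW x hx z hz
      rw [abs_sub_comm x z, abs_of_nonneg (by linarith : 0 ≤ z - x)] at e2
      have e3 : |e * (g x - g z)| ≤ c / 2 * (z - x) := by
        rw [abs_mul]
        calc _ ≤ |e| * (W * (z - x)) := by gcongr
          _ = |e| * W * (z - x) := by ring
          _ ≤ _ := by
            have : 0 ≤ z - x := by linarith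
            gcongr
      have e4 := neg_abs_le (e * (g x - g z))
      unfold U
      nlinarith
  obtain ⟨a, ha, ka⟩ := key 0
  obtain ⟨b, hb, kb⟩ := key (-π)
  obtain ⟨d, hd, kd⟩ := key π
  refine ⟨a, ha, b, hb, d, hd, fun x hx xa xb xd => ?_⟩
  have hU : |U f g e x y| ≤ 3 * π / 2 := by
    have e2 := h.hW x hx y hy
    have hxy : |x - y| ≤ 1 := abs_le.2 ⟨by linarith [hx.1, hy.2], by linarith [hx.2, hy.1]⟩
    have e3 : |e * (g x - g y)| ≤ π / 2 := by
      rw [abs_mul]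
      have := h.W0
      calc _ ≤ |e| * (W * 1) := by
            gcongr
            exact e2.trans (by gcongr)
        _ ≤ _ := by linarith
    have e5 : |f x - f y| ≤ π := by
      have a1 := h.hs 0 (by simp) x hx hx.1
      have a2 := h.hs x hx 1 (by simp) hx.2
      have a3 := h.hs 0 (by simp) y hy hy.1
      have a4 := h.hs y hy 1 (by simp) hy.2
      have a5 := h.hpi
      have b1 : 0 ≤ c * (x - 0) := mul_nonneg hc.le (by linarith [hx.1])
      have b2 : 0 ≤ c * (1 - x) := mul_nonneg hc.le (by linarith [hx.2])
      have b3 : 0 ≤ c * (y - 0) := mul_nonneg hc.le (by linarith [hy.1])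
      have b4 : 0 ≤ c * (1 - y) := mul_nonneg hc.le (by linarith [hy.2])
      exact abs_le.2 ⟨by linarith, by linarith⟩
    unfold U
    exact (abs_add_le _ _).trans (by linarith)
  have hK : 0 < 2 / π * (c / 2) := by positivity
  have fin : ∀ {t : ℝ} {k : ℝ}, x ≠ t → c / 2 * |x - t| ≤ |U f g e x y + k| →
      2 / π * |U f g e x y + k| ≤ |sin (U f g e x y)| →
      sin (U f g e x y) ≠ 0 ∧ ir (sin (U f g e x y)) ≤ 1 / √(2 / π * (c / 2)) * ir (x - t) := by
    intro t k ht h1 h2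
    have h3 : 2 / π * (c / 2) * |x - t| ≤ |sin (U f g e x y)| := by
      refine le_trans ?_ h2
      rw [mul_assoc]; gcongr
    have h4 := sub_ne_zero.2 ht
    refine ⟨?_, ir_le hK h4 h3⟩
    rw [← abs_pos]
    refine lt_of_lt_of_le ?_ h3
    have := abs_pos.2 h4
    positivity
  have i1 := ir_nonneg (x - a)
  have i2 := ir_nonneg (x - b)
  have i3 := ir_nonneg (x - d)
  rcases abs_sin_ge hU with q | q | q
  · obtain ⟨r1, r2⟩ := fin xa (ka x hx) (by simpa using q)
    exact ⟨r1, r2.trans (by gcongr; linarith)⟩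
  · obtain ⟨r1, r2⟩ := fin xb (kb x hx) (by simpa [sub_eq_add_neg] using q)
    exact ⟨r1, r2.trans (by gcongr; linarith)⟩
  · obtain ⟨r1, r2⟩ := fin xd (kd x hx) q
    exact ⟨r1, r2.trans (by gcongr; linarith)⟩

lemma Ioo_Icc {x : ℝ} (hx : x ∈ Set.Ioo (0:ℝ) 1) : x ∈ Set.Icc (0:ℝ) 1 := ⟨hx.1.le, hx.2.le⟩

lemma tau_pos {x : ℝ} (hx : x ∈ Set.Ioo (0:ℝ) 1) : 0 < x * (1 - x) :=
  mul_pos hx.1 (by linarith [hx.2])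

lemma sin_ge' (h : Hyp f g p c W P) {x y : ℝ} (hx : x ∈ Set.Icc (0:ℝ) 1) (hy : y ∈ Set.Ioo (0:ℝ) 1) :
    kap c * (y * (1 - y)) * |x - y| ≤ |sin (f x - f y)| := by
  refine le_trans ?_ (h.sin_ge hx (Ioo_Icc hy))
  have := h.kap_pos
  have h2 := (dd hx hy).2
  calc _ = kap c * (|x - y| * (y * (1 - y))) := by ring
    _ ≤ _ := by gcongr

lemma ir_sin (h : Hyp f g p c W P) {x y : ℝ} (hx : x ∈ Set.Icc (0:ℝ) 1) (hy : y ∈ Set.Ioo (0:ℝ) 1)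
    (hne : x ≠ y) : ir (sin (f x - f y)) ≤ 1 / √(kap c) * sg y * ir (x - y) := by
  have hk := h.kap_pos
  have := ir_le (mul_pos hk (tau_pos hy)) (sub_ne_zero.2 hne) (h.sin_ge' hx hy)
  rw [Real.sqrt_mul hk.le, ← one_div_mul_one_div] at this
  exact this

lemma d_sin (h : Hyp f g p c W P) {x y : ℝ} (hx : x ∈ Set.Ioo (0:ℝ) 1) (hy : y ∈ Set.Ioo (0:ℝ) 1) :
    |x - y| * (1 / |sin (f x - f y)|) ≤ 1 / kap c * (sg x * sg y) := by
  have hk := h.kap_pos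
  have s1 := sg_nonneg x
  have s2 := sg_nonneg y
  by_cases hne : x = y
  · subst hne; simp; positivity
  have h0 := h.sin_ge (Ioo_Icc hx) (Ioo_Icc hy)
  have h1 := (dd (Ioo_Icc hx) hy).2
  have h2 := (dd (Ioo_Icc hy) hx).2
  rw [abs_sub_comm] at h2
  have d0 : 0 < |x - y| := abs_pos.2 (sub_ne_zero.2 hne)
  have t1 := tau_pos hx
  have t2 := tau_pos hy
  have h3 : √(x * (1 - x)) * √(y * (1 - y)) ≤ 1 - |x - y| := by
    rw [← Real.sqrt_mul t1.le]
    apply Real.sqrt_le_iff.2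
    constructor
    · linarith
    · rw [sq]; gcongr
      linarith
  have hspos := abs_pos.2 (h.sin_ne (Ioo_Icc hx) hy hne)
  unfold sg
  have q1 := Real.sqrt_pos.2 t1
  have q2 := Real.sqrt_pos.2 t2
  rw [one_div_mul_one_div, one_div_mul_one_div, mul_one_div, div_le_div_iff₀ hspos (by positivity), one_mul]
  refine le_trans ?_ h0
  calc _ = kap c * (|x - y| * (√(x * (1 - x)) * √(y * (1 - y)))) := by ring
    _ ≤ _ := by gcongr

lemma d_ir {d : ℝ} (hd : |d| ≤ 1) : |d| * ir d ≤ 1 := by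
  unfold ir
  by_cases h : d = 0
  · simp [h]
  have h1 := abs_pos.2 h
  have h2 := Real.sqrt_pos.2 h1
  rw [mul_one_div, Real.div_sqrt]
  exact Real.sqrt_le_one.2 hd

lemma U_zero (x y : ℝ) : U f g 0 x y = f x - f y := by simp [U]

lemma sin_diff (h : Hyp f g p c W P) {e x y : ℝ} (hx : x ∈ Set.Icc (0:ℝ) 1) (hy : y ∈ Set.Icc (0:ℝ) 1) :
    |sin (U f g e x y) - sin (f x - f y)| ≤ |e| * W * |x - y| := by
  refine (Real.abs_sin_sub_sin_le _ _).trans ?_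
  unfold U
  rw [add_sub_cancel_left, abs_mul, mul_assoc]
  gcongr
  exact h.hW x hx y hy

/-- the integrand -/
noncomputable def Lg (f g : ℝ → ℝ) (e x y : ℝ) : ℝ := Real.log |sin (U f g e x y)|

lemma Lg_meas (h : Hyp f g p c W P) (e : ℝ) : Measurable (fun z : ℝ × ℝ => Lg f g e z.1 z.2) := by
  have := h.hf.measurable; have := h.hg.measurable
  unfold Lg U; fun_prop

/-- outer constant -/
noncomputable def C0 (c W : ℝ) : ℝ :=
  2 * W * (1 / kap c * (∫ x, sg x ∂mu) + 1 / √(kap c) * (1 / √(2 / π * (c / 2)) * (J + J + J)))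

lemma outer_pt (h : Hyp f g p c W P) {e y : ℝ} (he1 : |e| * W ≤ c / 2) (he2 : |e| * W ≤ π / 2)
    (hy : y ∈ Set.Ioo (0:ℝ) 1) :
    ∃ B : ℝ → ℝ, Integrable B mu ∧ ∫ x, B x ∂mu ≤ C0 c W ∧
      ∀ᵐ x ∂mu, |Lg f g e x y - Lg f g 0 x y| ≤ |e| * sg y * B x := by
  obtain ⟨a, ha, b, hb, d, hd, H⟩ := h.near he1 he2 (Ioo_Icc hy)
  obtain ⟨ia, ja⟩ := ir_shift a ha
  obtain ⟨ib, jb⟩ := ir_shift b hb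
  obtain ⟨id, jd⟩ := ir_shift d hd
  have hk := h.kap_pos
  have hW := h.W0
  have I1 := sg_int.const_mul (1 / kap c)
  have Iab : Integrable (fun x => ir (x - a) + ir (x - b)) mu := ia.add ib
  have Iabd : Integrable (fun x => ir (x - a) + ir (x - b) + ir (x - d)) mu := Iab.add id
  have I2 := Iabd.const_mul (1 / √(2 / π * (c / 2)))
  have I3 := I2.const_mul (1 / √(kap c))
  refine ⟨fun x => 2 * W * (1 / kap c * sg x + 1 / √(kap c) *
    (1 / √(2 / π * (c / 2)) * (ir (x - a) + ir (x - b) + ir (x - d)))), (I1.add I3).const_mul _, ?_, ?_⟩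
  · rw [integral_const_mul, integral_add I1 I3, integral_const_mul, integral_const_mul,
      integral_const_mul, integral_add Iab id, integral_add ia ib]
    unfold C0
    gcongr
  · filter_upwards [ae_mem, ae_ne a, ae_ne b, ae_ne d, ae_ne y] with x hx xa xb xd xy
    obtain ⟨r1, r2⟩ := H x (Ioo_Icc hx) xa xb xd
    have hx' := Ioo_Icc hx
    unfold Lg
    rw [U_zero]
    refine (abs_log_sub_le r1 (h.sin_ne hx' hy xy)).trans ?_
    have k1 := h.sin_diff (e := e) hx' (Ioo_Icc hy)
    have k2 := h.d_sin hx hy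
    have k3 := h.ir_sin hx' hy xy
    have k4 := d_ir (d := x - y) (dd hx' hy).1.le
    set S := 1 / √(2 / π * (c / 2)) * (ir (x - a) + ir (x - b) + ir (x - d))
    have S0 : 0 ≤ S := (ir_nonneg _).trans r2
    have n1 := ir_nonneg (sin (f x - f y))
    have n2 := ir_nonneg (sin (U f g e x y))
    have n3 := sg_nonneg y
    have n4 := ir_nonneg (x - y)
    have k5 : |x - y| * (ir (sin (f x - f y)) * ir (sin (U f g e x y))) ≤ 1 / √(kap c) * sg y * S := by
      calc _ ≤ |x - y| * ((1 / √(kap c) * sg y * ir (x - y)) * S) := by gcongr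
        _ = (|x - y| * ir (x - y)) * (1 / √(kap c) * sg y * S) := by ring
        _ ≤ 1 * (1 / √(kap c) * sg y * S) := by gcongr
        _ = _ := by ring
    calc _ ≤ 2 * (|e| * W * |x - y|) * (1 / |sin (f x - f y)| + ir (sin (f x - f y)) * ir (sin (U f g e x y))) := by
          gcongr
      _ = 2 * |e| * W * (|x - y| * (1 / |sin (f x - f y)|) + |x - y| * (ir (sin (f x - f y)) * ir (sin (U f g e x y)))) := by ring
      _ ≤ 2 * |e| * W * (1 / kap c * (sg x * sg y) + 1 / √(kap c) * sg y * S) := by gcongr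
      _ = _ := by ring

lemma Lg0_pt (h : Hyp f g p c W P) {x y : ℝ} (hx : x ∈ Set.Icc (0:ℝ) 1) (hy : y ∈ Set.Ioo (0:ℝ) 1) (hne : x ≠ y) :
    abs (Real.log |sin (f x - f y)|) ≤ 4 * (1 / √(kap c) * sg y * ir (x - y)) := by
  have hs := h.sin_ne hx hy hne
  have hs' := abs_pos.2 hs
  have h1 := abs_log_le hs'
  have h2 : |sin (f x - f y)| ≤ 1 := Real.abs_sin_le_one _
  have h3 := h.ir_sin hx hy hne
  have h4 : abs (|sin (f x - f y)| - 1) ≤ 1 := abs_le.2 ⟨by linarith, by linarith⟩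
  have h5 : 1 ≤ ir (sin (f x - f y)) := by
    unfold ir
    rw [le_div_iff₀ (Real.sqrt_pos.2 hs'), one_mul]
    exact Real.sqrt_le_one.2 h2
  change _ ≤ _ * (1 + ir (sin (f x - f y))) at h1
  refine h1.trans ?_
  calc _ ≤ 2 * 1 * (ir (sin (f x - f y)) + ir (sin (f x - f y))) := by gcongr
    _ ≤ _ := by linarith

lemma Lg0_int (h : Hyp f g p c W P) {y : ℝ} (hy : y ∈ Set.Ioo (0:ℝ) 1) :
    Integrable (fun x => Lg f g 0 x y) mu ∧ |∫ x, Lg f g 0 x y ∂mu| ≤ 4 * (1 / √(kap c)) * J * sg y := by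
  obtain ⟨i1, j1⟩ := ir_shift y (Ioo_Icc hy)
  have hk := h.kap_pos
  have I : Integrable (fun x => 4 * (1 / √(kap c) * sg y * ir (x - y))) mu :=
    (i1.const_mul _).const_mul _
  have hb : ∀ᵐ x ∂mu, ‖Lg f g 0 x y‖ ≤ 4 * (1 / √(kap c) * sg y * ir (x - y)) := by
    filter_upwards [ae_mem, ae_ne y] with x hx hne
    unfold Lg
    rw [U_zero]
    exact h.Lg0_pt (Ioo_Icc hx) hy hne
  have n3 := sg_nonneg y
  refine ⟨I.mono' ((h.Lg_meas 0).comp (measurable_id.prodMk measurable_const)).aestronglyMeasurable hb, ?_⟩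
  refine (norm_integral_le_of_norm_le I hb).trans ?_
  rw [integral_const_mul, integral_const_mul]
  calc _ ≤ 4 * (1 / √(kap c) * sg y * J) := by gcongr
    _ = _ := by ring

lemma outer_bd (h : Hyp f g p c W P) {e y : ℝ} (he1 : |e| * W ≤ c / 2) (he2 : |e| * W ≤ π / 2)
    (hy : y ∈ Set.Ioo (0:ℝ) 1) :
    |(∫ x, Lg f g e x y ∂mu) - ∫ x, Lg f g 0 x y ∂mu| ≤ C0 c W * sg y * |e| := by
  obtain ⟨B, hB, hB2, hB3⟩ := h.outer_pt he1 he2 hy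
  have m : ∀ e, AEStronglyMeasurable (fun x => Lg f g e x y) mu := fun e =>
    ((h.Lg_meas e).comp (measurable_id.prodMk measurable_const)).aestronglyMeasurable
  have i0 := (h.Lg0_int hy).1
  have iB := hB.const_mul (|e| * sg y)
  have i1 : Integrable (fun x => Lg f g e x y - Lg f g 0 x y) mu :=
    iB.mono' ((m e).sub (m 0)) hB3
  have hB4 : ∀ᵐ x ∂mu, ‖Lg f g e x y - Lg f g 0 x y‖ ≤ |e| * sg y * B x := hB3
  have i2 : Integrable (fun x => Lg f g e x y) mu := by
    have := i1.add i0
    refine this.congr (ae_of_all _ fun x => ?_)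
    simp
  rw [← integral_sub i2 i0]
  refine (norm_integral_le_of_norm_le iB hB4).trans ?_
  rw [integral_const_mul]
  have n3 := sg_nonneg y
  calc _ ≤ |e| * sg y * C0 c W := by gcongr
    _ = _ := by ring

lemma inner_deriv (h : Hyp f g p c W P) {y : ℝ} (hy : y ∈ Set.Ioo (0:ℝ) 1) :
    HasDerivAt (fun e => ∫ x, Lg f g e x y ∂mu)
      (∫ x, cot (f x - f y) * (g x - g y) ∂mu) 0 := by
  have hk := h.kap_pos
  have t := tau_pos hy
  set Q := W / (kap c * (y * (1 - y))) with hQ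
  have Q0 : 0 ≤ Q := div_nonneg h.W0 (by positivity)
  have m : ∀ e, AEStronglyMeasurable (fun x => Lg f g e x y) mu := fun e =>
    ((h.Lg_meas e).comp (measurable_id.prodMk measurable_const)).aestronglyMeasurable
  have := mu_fin
  refine (deriv_lip' (F := fun e x => Lg f g e x y) (s := Metric.ball 0 (1 / (2 * (Q + 1))))
    (bound := fun _ => 6 * Q) (Metric.ball_mem_nhds _ (by positivity)) (fun e _ => m e) (h.Lg0_int hy).1 ?_ ?_ ?_ ?_).2
  · have := h.hf.measurable; have := h.hg.measurable
    apply Measurable.aestronglyMeasurable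
    simp only [Real.cot_eq_cos_div_sin]
    fun_prop
  · filter_upwards [ae_mem, ae_ne y] with x hx hne e he
    have hx' := Ioo_Icc hx
    rw [mem_ball_zero_iff, lt_div_iff₀ (by positivity), Real.norm_eq_abs] at he
    have he' : |e| * Q ≤ 1 / 2 := by nlinarith [abs_nonneg e]
    have k1 := h.sin_diff (e := e) hx' (Ioo_Icc hy)
    have k2 := h.sin_ge' hx' hy
    have sne := h.sin_ne hx' hy hne
    have spos := abs_pos.2 sne
    have k3 : |sin (U f g e x y) - sin (f x - f y)| ≤ |e| * Q * |sin (f x - f y)| := by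
      refine k1.trans ?_
      have : W = Q * (kap c * (y * (1 - y))) := (div_mul_cancel₀ W (by positivity)).symm
      calc _ = |e| * Q * (kap c * (y * (1 - y)) * |x - y|) := by rw [this]; ring
        _ ≤ _ := by gcongr
    have k4 : |sin (f x - f y)| / 2 ≤ |sin (U f g e x y)| := by
      have := abs_sub_abs_le_abs_sub (sin (f x - f y)) (sin (U f g e x y))
      rw [abs_sub_comm] at this
      nlinarith
    have upos : 0 < |sin (U f g e x y)| := by linarith
    set r := |sin (U f g e x y)| / |sin (f x - f y)| with hr
    have r0 : 1 / 2 ≤ r := by rw [hr, le_div_iff₀ spos]; linarith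
    have r1 : abs (r - 1) ≤ |e| * Q := by
      rw [hr, div_sub_one spos.ne', abs_div, abs_abs, div_le_iff₀ spos]
      exact (abs_abs_sub_abs_le_abs_sub _ _).trans k3
    have r2 : 1 / √r ≤ 2 := by
      have : 1 / 2 ≤ √r := Real.le_sqrt_of_sq_le (by linarith)
      rw [div_le_iff₀ (by linarith)]
      linarith
    simp only [Lg, U_zero, sub_zero, Real.norm_eq_abs]
    rw [← Real.log_div upos.ne' spos.ne']
    refine (abs_log_le (by linarith : 0 < r)).trans ?_
    calc _ ≤ 2 * (|e| * Q) * (1 + 2) := by gcongr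
      _ = _ := by ring
  · exact integrable_const _
  · filter_upwards [ae_mem, ae_ne y] with x hx hne
    have sne := h.sin_ne (Ioo_Icc hx) hy hne
    simp only [Lg, U, Real.log_abs]
    have h1 : HasDerivAt (fun e : ℝ => f x - f y + e * (g x - g y)) (g x - g y) 0 := by
      simpa using ((hasDerivAt_id (0:ℝ)).mul_const (g x - g y)).const_add (f x - f y)
    have h2 := (h1.sin).log (by simpa using sne)
    convert h2 using 1
    rw [Real.cot_eq_cos_div_sin]
    simp
    ring

lemma main_deriv (h : Hyp f g p c W P) :
    HasDerivAt (fun e => ∫ y, ∫ x, Lg f g e x y ∂mu ∂mu)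
      (∫ y, ∫ x, cot (f x - f y) * (g x - g y) ∂mu ∂mu) 0 := by
  have hc := h.c0
  have hW := h.W0
  have hpi := Real.pi_pos
  have m : ∀ e, AEStronglyMeasurable (fun y => ∫ x, Lg f g e x y ∂mu) mu := fun e =>
    ((h.Lg_meas e).stronglyMeasurable.integral_prod_left).aestronglyMeasurable
  set r := min (c / 2) (π / 2) / (W + 1)
  have r0 : 0 < r := by positivity
  refine (deriv_lip' (F := fun e y => ∫ x, Lg f g e x y ∂mu) (s := Metric.ball 0 r)
    (bound := fun y => C0 c W * sg y) (Metric.ball_mem_nhds _ r0) (fun e _ => m e) ?_ ?_ ?_ ?_ ?_).2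
  · refine (sg_int.const_mul (4 * (1 / √(kap c)) * J)).mono' (m 0) ?_
    filter_upwards [ae_mem] with y hy
    exact (h.Lg0_int hy).2
  · apply StronglyMeasurable.aestronglyMeasurable
    have := h.hf.measurable; have := h.hg.measurable
    have q : Measurable (fun z : ℝ × ℝ => cot (f z.1 - f z.2) * (g z.1 - g z.2)) := by
      simp only [Real.cot_eq_cos_div_sin]
      fun_prop
    exact q.stronglyMeasurable.integral_prod_left
  · filter_upwards [ae_mem] with y hy e he
    rw [mem_ball_zero_iff, lt_div_iff₀ (by positivity), Real.norm_eq_abs, lt_min_iff] at he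
    have := abs_nonneg e
    simpa using h.outer_bd (e := e) (by nlinarith) (by nlinarith) hy
  · exact sg_int.const_mul _
  · filter_upwards [ae_mem] with y hy
    exact h.inner_deriv hy

/-- regularised cotangent -/
noncomputable def ct (η u : ℝ) : ℝ := sin u * cos u / (sin u ^ 2 + η)

lemma ct_neg (η u : ℝ) : ct η (-u) = - ct η u := by
  unfold ct; rw [Real.sin_neg, Real.cos_neg]; ring

lemma ct_cont {η : ℝ} (hη : 0 < η) : Continuous (ct η) := by
  unfold ct
  refine Continuous.div (by fun_prop) (by fun_prop) (fun x => ?_)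
  positivity

lemma ct_le {η : ℝ} (hη : 0 < η) (u : ℝ) : |ct η u| ≤ 1 / |sin u| := by
  unfold ct
  by_cases h : sin u = 0
  · simp [h]
  have h1 := abs_pos.2 h
  rw [abs_div, abs_mul, div_le_div_iff₀ (by positivity) h1, abs_of_nonneg (by positivity : 0 ≤ sin u ^ 2 + η)]
  have := Real.abs_cos_le_one u
  have h2 := sq_abs (sin u)
  nlinarith [mul_le_mul_of_nonneg_left this (sq_nonneg |sin u|)]

lemma ct_bdd {η : ℝ} (hη : 0 < η) (u : ℝ) : |ct η u| ≤ 1 / η := by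
  unfold ct
  rw [abs_div, abs_mul, abs_of_nonneg (by positivity : 0 ≤ sin u ^ 2 + η)]
  have h1 := Real.abs_cos_le_one u
  have h2 := Real.abs_sin_le_one u
  gcongr
  · exact mul_le_one₀ h2 (abs_nonneg _) h1
  · nlinarith [sq_nonneg (sin u)]

lemma ct_tendsto (u : ℝ) : Tendsto (fun η => ct η u) (𝓝[>] 0) (𝓝 (cot u)) := by
  unfold ct
  rw [Real.cot_eq_cos_div_sin]
  by_cases h : sin u = 0
  · simp [h]
  have e : cos u / sin u = sin u * cos u / (sin u ^ 2 + 0) := by field_simp; ring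
  rw [e]
  apply tendsto_nhdsWithin_of_tendsto_nhds
  apply ContinuousAt.tendsto (f := fun η => sin u * cos u / (sin u ^ 2 + η)) (x := 0)
  apply ContinuousAt.div (by fun_prop) (by fun_prop)
  positivity

/-- regularised potential -/
noncomputable def lr (η u : ℝ) : ℝ := Real.log (sin u ^ 2 + η) / 2

lemma lr_deriv {η : ℝ} (hη : 0 < η) (u : ℝ) : HasDerivAt (lr η) (ct η u) u := by
  unfold lr ct
  have h1 := (((Real.hasDerivAt_sin u).pow 2).add_const η).log (by
    have := sq_nonneg (sin u); simp only [Pi.pow_apply]; linarith)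
  have h2 := h1.div_const 2
  refine h2.congr_deriv ?_
  simp only [Pi.pow_apply]
  push_cast
  ring

lemma lr_tendsto {u : ℝ} (h : sin u ≠ 0) : Tendsto (fun η => lr η u) (𝓝[>] 0) (𝓝 (Real.log |sin u|)) := by
  unfold lr
  have e : Real.log |sin u| = Real.log (sin u ^ 2 + 0) / 2 := by
    rw [add_zero, Real.log_pow, Real.log_abs]; push_cast; ring
  rw [e]
  apply tendsto_nhdsWithin_of_tendsto_nhds
  apply ContinuousAt.tendsto (f := fun η => Real.log (sin u ^ 2 + η) / 2) (x := 0)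
  apply ContinuousAt.div_const
  apply ContinuousAt.log (by fun_prop)
  positivity

lemma lr_le {η u : ℝ} (hη : 0 < η) (hη1 : η < 1) (h : sin u ≠ 0) :
    |lr η u| ≤ abs (Real.log |sin u|) + 1 := by
  unfold lr
  have h0 : 0 < sin u ^ 2 := by positivity
  have h1 := Real.log_le_log h0 (by linarith : sin u ^ 2 ≤ sin u ^ 2 + η)
  have h2 := Real.log_le_sub_one_of_pos (by linarith : 0 < sin u ^ 2 + η)
  have h3 := Real.sin_sq_le_one u
  rw [Real.log_pow, ← Real.log_abs (sin u)] at h1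
  push_cast at h1
  have h4 := neg_abs_le (Real.log |sin u|)
  have h5 := abs_nonneg (Real.log |sin u|)
  exact abs_le.2 ⟨by linarith, by linarith⟩

/-- the principal value (half of it) -/
noncomputable def A (f p : ℝ → ℝ) (x : ℝ) : ℝ :=
  (Real.log |sin (f x - f 0)| - Real.log |sin (f x - f 1)| + ∫ y, (p x - p y) * cot (f x - f y) ∂mu) / p x

/-- regularised version -/
noncomputable def Ae (f : ℝ → ℝ) (η x : ℝ) : ℝ := ∫ y, ct η (f x - f y) ∂mu

lemma Ae_eq (h : Hyp f g p c W P) {η x : ℝ} (hη : 0 < η) (hx : x ∈ Set.Ioo (0:ℝ) 1) :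
    Ae f η x = (lr η (f x - f 0) - lr η (f x - f 1) + ∫ y, (p x - p y) * ct η (f x - f y) ∂mu) / p x := by
  have hf := h.hf
  have hp := h.hp
  have hct := ct_cont hη
  have hpx : p x ≠ 0 := by
    have := h.hpc x (Ioo_Icc hx); have := h.c0; intro q; linarith
  have c1 : Continuous (fun y => ct η (f x - f y)) := by fun_prop
  have hl : Continuous (lr η) := by
    rw [continuous_iff_continuousAt]; exact fun u => (lr_deriv hη u).continuousAt
  have ftc := intervalIntegral.integral_eq_sub_of_hasDerivAt_of_le (a := 0) (b := 1)
    (f := fun y => lr η (f x - f y)) (f' := fun y => ct η (f x - f y) * (- p y)) zero_le_one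
    (by fun_prop) (fun y hy => by
      have := (lr_deriv hη (f x - f y)).comp y ((h.hd y hy).const_sub (f x))
      exact this) ((by fun_prop : Continuous _).intervalIntegrable _ _)
  rw [eq_div_iff hpx]
  unfold Ae
  rw [← int01, ← int01, ← intervalIntegral.integral_mul_const]
  rw [show lr η (f x - f 0) - lr η (f x - f 1) = -(∫ y in (0:ℝ)..1, ct η (f x - f y) * (- p y)) by rw [ftc]; ring]
  rw [← intervalIntegral.integral_neg, ← intervalIntegral.integral_add]
  · congr 1; ext y; ring
  · exact (by fun_prop : Continuous _).intervalIntegrable _ _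
  · exact (by fun_prop : Continuous _).intervalIntegrable _ _

lemma cot_le (u : ℝ) : |cot u| ≤ 1 / |sin u| := by
  rw [Real.cot_eq_cos_div_sin, abs_div]
  gcongr
  exact Real.abs_cos_le_one u

/-- bound for remainder -/
lemma rem_le (h : Hyp f g p c W P) {x y t : ℝ} (hx : x ∈ Set.Ioo (0:ℝ) 1) (hy : y ∈ Set.Ioo (0:ℝ) 1)
    (ht : |t| ≤ 1 / |sin (f x - f y)|) : |(p x - p y) * t| ≤ P / kap c * sg x * sg y := by
  have h1 := h.hP x (Ioo_Icc hx) y (Ioo_Icc hy)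
  have h2 := h.d_sin hx hy
  have hP := h.P0
  rw [abs_mul]
  calc _ ≤ P * |x - y| * (1 / |sin (f x - f y)|) := by gcongr
    _ = P * (|x - y| * (1 / |sin (f x - f y)|)) := by ring
    _ ≤ P * (1 / kap c * (sg x * sg y)) := by gcongr
    _ = _ := by ring

lemma rem_le' (h : Hyp f g p c W P) {x y t : ℝ} (hx : x ∈ Set.Ioo (0:ℝ) 1) (hy : y ∈ Set.Ioo (0:ℝ) 1)
    (ht : |t| ≤ 1 / |sin (f x - f y)|) : |t * (g x - g y)| ≤ W / kap c * (sg x * sg y) := by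
  have h1 := h.hW x (Ioo_Icc hx) y (Ioo_Icc hy)
  have h2 := h.d_sin hx hy
  have hP := h.W0
  rw [mul_comm, abs_mul]
  calc _ ≤ W * |x - y| * (1 / |sin (f x - f y)|) := by gcongr
    _ = W * (|x - y| * (1 / |sin (f x - f y)|)) := by ring
    _ ≤ W * (1 / kap c * (sg x * sg y)) := by gcongr
    _ = _ := by ring

lemma rem_tendsto (h : Hyp f g p c W P) {x : ℝ} (hx : x ∈ Set.Ioo (0:ℝ) 1) :
    Tendsto (fun η => ∫ y, (p x - p y) * ct η (f x - f y) ∂mu) (𝓝[>] 0)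
      (𝓝 (∫ y, (p x - p y) * cot (f x - f y) ∂mu)) := by
  have hf := h.hf
  have hp := h.hp
  refine tendsto_integral_filter_of_dominated_convergence (fun y => P / kap c * sg x * sg y) ?_ ?_
    (sg_int.const_mul _) ?_
  · filter_upwards [self_mem_nhdsWithin] with η hη
    have := ct_cont hη
    exact (by fun_prop : Continuous fun y => (p x - p y) * ct η (f x - f y)).aestronglyMeasurable
  · filter_upwards [self_mem_nhdsWithin] with η hη
    filter_upwards [ae_mem] with y hy
    exact h.rem_le hx hy (ct_le hη _)
  · exact ae_of_all _ fun y => (ct_tendsto _).const_mul _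

lemma sin_ne0 (h : Hyp f g p c W P) {x : ℝ} (hx : x ∈ Set.Ioo (0:ℝ) 1) {y : ℝ} (hy : y ∈ Set.Icc (0:ℝ) 1)
    (hne : y ≠ x) : sin (f x - f y) ≠ 0 := by
  have := h.sin_ne hy hx hne
  rwa [← neg_sub, Real.sin_neg, neg_ne_zero] at this

lemma Ae_tendsto (h : Hyp f g p c W P) {x : ℝ} (hx : x ∈ Set.Ioo (0:ℝ) 1) :
    Tendsto (fun η => Ae f η x) (𝓝[>] 0) (𝓝 (A f p x)) := by
  have h0 := h.sin_ne0 hx (y := 0) (by simp) hx.1.ne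
  have h1 := h.sin_ne0 hx (y := 1) (by simp) hx.2.ne'
  have := (((lr_tendsto h0).sub (lr_tendsto h1)).add (h.rem_tendsto hx)).div_const (p x)
  refine this.congr' ?_
  filter_upwards [self_mem_nhdsWithin] with η hη
  rw [h.Ae_eq hη hx]

lemma log_le' (h : Hyp f g p c W P) {x y : ℝ} (hx : x ∈ Set.Ioo (0:ℝ) 1)
    (hk : kap c * (x * (1 - x)) ≤ |sin (f x - f y)|) :
    abs (Real.log |sin (f x - f y)|) ≤ 4 * (1 / √(kap c) * sg x) := by
  have t := tau_pos hx
  have kp := h.kap_pos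
  have hs' : 0 < |sin (f x - f y)| := lt_of_lt_of_le (by positivity) hk
  have h1 := abs_log_le hs'
  have h2 : |sin (f x - f y)| ≤ 1 := Real.abs_sin_le_one _
  have h3 : 1 / √|sin (f x - f y)| ≤ 1 / √(kap c) * sg x := by
    unfold sg
    rw [one_div_mul_one_div, ← Real.sqrt_mul kp.le]
    gcongr
  have h4 : abs (|sin (f x - f y)| - 1) ≤ 1 := abs_le.2 ⟨by linarith, by linarith⟩
  have h5 : 1 ≤ 1 / √|sin (f x - f y)| := by
    rw [le_div_iff₀ (Real.sqrt_pos.2 hs'), one_mul]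
    exact Real.sqrt_le_one.2 h2
  refine h1.trans ?_
  calc _ ≤ 2 * 1 * (1 / √|sin (f x - f y)| + 1 / √|sin (f x - f y)|) := by gcongr
    _ ≤ _ := by linarith

/-- constant -/
noncomputable def C1 (c P : ℝ) : ℝ :=
  ((4 * (1 / √(kap c)) + 1) + (4 * (1 / √(kap c)) + 1) + P / kap c * ∫ y, sg y ∂mu) / c

lemma Ae_le (h : Hyp f g p c W P) {η x : ℝ} (hη : 0 < η) (hη1 : η < 1) (hx : x ∈ Set.Ioo (0:ℝ) 1) :
    |Ae f η x| ≤ C1 c P * sg x := by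
  have h0 := h.sin_ne0 hx (y := 0) (by simp) hx.1.ne
  have h1 := h.sin_ne0 hx (y := 1) (by simp) hx.2.ne'
  have kp := h.kap_pos
  have q0 := h.sin_ge (Ioo_Icc hx) (y := 0) (by simp)
  rw [sub_zero, abs_of_pos hx.1] at q0
  have q1 := h.sin_ge (Ioo_Icc hx) (y := 1) (by simp)
  rw [abs_of_neg (by linarith [hx.2] : x - 1 < 0)] at q1
  have l0 := h.log_le' hx (y := 0) q0
  have l1 := h.log_le' hx (y := 1) (by refine le_trans (le_of_eq ?_) q1; ring)
  have m0 := lr_le hη hη1 h0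
  have m1 := lr_le hη hη1 h1
  have s1 := one_le_sg hx
  have hpx := h.hpc x (Ioo_Icc hx)
  have hc := h.c0
  have r : |∫ y, (p x - p y) * ct η (f x - f y) ∂mu| ≤ P / kap c * sg x * ∫ y, sg y ∂mu := by
    have hb : ∀ᵐ y ∂mu, ‖(p x - p y) * ct η (f x - f y)‖ ≤ P / kap c * sg x * sg y := by
      filter_upwards [ae_mem] with y hy
      exact h.rem_le hx hy (ct_le hη _)
    refine (norm_integral_le_of_norm_le (sg_int.const_mul _) hb).trans ?_
    rw [integral_const_mul]
  rw [h.Ae_eq hη hx, abs_div]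
  unfold C1
  rw [div_mul_eq_mul_div]
  have hcp : c ≤ |p x| := by rw [abs_of_nonpos (by linarith)]; linarith
  have num : |lr η (f x - f 0) - lr η (f x - f 1) + ∫ y, (p x - p y) * ct η (f x - f y) ∂mu| ≤
      ((4 * (1 / √(kap c)) + 1) + (4 * (1 / √(kap c)) + 1) + P / kap c * ∫ y, sg y ∂mu) * sg x := by
    refine (abs_add_le _ _).trans ((add_le_add_left (abs_sub _ _) _).trans ?_)
    nlinarith
  exact div_le_div₀ ((abs_nonneg _).trans num) num hc hcp

lemma lim_rhs (h : Hyp f g p c W P) :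
    Tendsto (fun η => ∫ x, Ae f η x * g x ∂mu) (𝓝[>] 0) (𝓝 (∫ x, A f p x * g x ∂mu)) := by
  have hf := h.hf
  have hg := h.hg
  obtain ⟨M, hM⟩ := (isCompact_Icc (a := (0:ℝ)) (b := 1)).exists_bound_of_continuousOn hg.continuousOn
  refine tendsto_integral_filter_of_dominated_convergence (fun x => C1 c P * sg x * M) ?_ ?_
    ((sg_int.const_mul _).mul_const _) ?_
  · filter_upwards [self_mem_nhdsWithin] with η hη
    have := ct_cont hη
    have q : Continuous (fun z : ℝ × ℝ => ct η (f z.1 - f z.2)) := by fun_prop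
    have q2 : StronglyMeasurable (Ae f η) := by
      have := mu_fin
      exact q.stronglyMeasurable.integral_prod_right
    exact (q2.mul hg.stronglyMeasurable).aestronglyMeasurable
  · have e1 : ∀ᶠ η in 𝓝[>] (0:ℝ), η < 1 :=
      eventually_nhdsWithin_of_eventually_nhds (gt_mem_nhds zero_lt_one)
    filter_upwards [self_mem_nhdsWithin, e1] with η hη hη1
    filter_upwards [ae_mem] with x hx
    rw [norm_mul]
    have := h.Ae_le hη hη1 hx
    exact mul_le_mul this (hM x (Ioo_Icc hx)) (norm_nonneg _) ((abs_nonneg _).trans this)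
  · filter_upwards [ae_mem] with x hx
    exact (h.Ae_tendsto hx).mul_const _

lemma prod_mem : ∀ᵐ z ∂(mu.prod mu), z.1 ∈ Set.Ioo (0:ℝ) 1 ∧ z.2 ∈ Set.Ioo (0:ℝ) 1 := by
  unfold mu
  rw [Measure.prod_restrict]
  exact ae_restrict_mem (measurableSet_Ioo.prod measurableSet_Ioo)

lemma lhs_int (h : Hyp f g p c W P) : Integrable (fun z : ℝ × ℝ => cot (f z.1 - f z.2) * (g z.1 - g z.2)) (mu.prod mu) := by
  have := h.hf.measurable; have := h.hg.measurable
  have q : Measurable (fun z : ℝ × ℝ => cot (f z.1 - f z.2) * (g z.1 - g z.2)) := by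
      simp only [Real.cot_eq_cos_div_sin]
      fun_prop
  refine ((sg_int.mul_prod sg_int).const_mul (W / kap c)).mono' q.aestronglyMeasurable ?_
  filter_upwards [prod_mem] with z hz
  exact h.rem_le' hz.1 hz.2 (cot_le _)

lemma lim_lhs (h : Hyp f g p c W P) :
    Tendsto (fun η => ∫ z, ct η (f z.1 - f z.2) * (g z.1 - g z.2) ∂(mu.prod mu)) (𝓝[>] 0)
      (𝓝 (∫ z, cot (f z.1 - f z.2) * (g z.1 - g z.2) ∂(mu.prod mu))) := by
  have hf := h.hf
  have hg := h.hg
  refine tendsto_integral_filter_of_dominated_convergence (fun z => W / kap c * (sg z.1 * sg z.2)) ?_ ?_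
    ((sg_int.mul_prod sg_int).const_mul _) ?_
  · filter_upwards [self_mem_nhdsWithin] with η hη
    have := ct_cont hη
    exact (by fun_prop : Continuous fun z : ℝ × ℝ => ct η (f z.1 - f z.2) * (g z.1 - g z.2)).aestronglyMeasurable
  · filter_upwards [self_mem_nhdsWithin] with η hη
    filter_upwards [prod_mem] with z hz
    exact h.rem_le' hz.1 hz.2 (ct_le hη _)
  · exact ae_of_all _ fun y => (ct_tendsto _).mul_const _

lemma symm_eq (h : Hyp f g p c W P) {η : ℝ} (hη : 0 < η) :
    ∫ z, ct η (f z.1 - f z.2) * (g z.1 - g z.2) ∂(mu.prod mu) = 2 * ∫ x, Ae f η x * g x ∂mu := by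
  have hf := h.hf
  have hg := h.hg
  have hct := ct_cont hη
  have := mu_fin
  obtain ⟨M, hM⟩ := (isCompact_Icc (a := (0:ℝ)) (b := 1)).exists_bound_of_continuousOn hg.continuousOn
  have c1 : Continuous fun z : ℝ × ℝ => ct η (f z.1 - f z.2) * g z.1 := by fun_prop
  have i1 : Integrable (fun z : ℝ × ℝ => ct η (f z.1 - f z.2) * g z.1) (mu.prod mu) := by
    refine (integrable_const (1 / η * M)).mono' c1.aestronglyMeasurable ?_
    filter_upwards [prod_mem] with z hz
    rw [norm_mul]
    exact mul_le_mul (ct_bdd hη _) (hM _ (Ioo_Icc hz.1)) (norm_nonneg _) (by positivity)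
  have i2 : Integrable (fun z : ℝ × ℝ => ct η (f z.swap.1 - f z.swap.2) * g z.swap.1) (mu.prod mu) := i1.swap
  have e : ∀ z : ℝ × ℝ, ct η (f z.1 - f z.2) * (g z.1 - g z.2) =
      ct η (f z.1 - f z.2) * g z.1 + ct η (f z.swap.1 - f z.swap.2) * g z.swap.1 := by
    intro z
    simp only [Prod.fst_swap, Prod.snd_swap]
    rw [← neg_sub (f z.1), ct_neg]; ring
  simp_rw [e]
  rw [integral_add i1 i2, integral_prod_swap (fun z : ℝ × ℝ => ct η (f z.1 - f z.2) * g z.1),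
    integral_prod _ i1, two_mul]
  simp only [Ae, integral_mul_const]

lemma main_eq (h : Hyp f g p c W P) :
    ∫ y, ∫ x, cot (f x - f y) * (g x - g y) ∂mu ∂mu = 2 * ∫ x, A f p x * g x ∂mu := by
  have := mu_fin
  have h1 := h.lim_lhs
  have h2 := h.lim_rhs.const_mul 2
  have h3 := tendsto_nhds_unique (h1.congr' (by
    filter_upwards [self_mem_nhdsWithin] with η hη
    exact h.symm_eq hη)) h2
  rw [← h3, integral_prod_symm _ h.lhs_int]

lemma R_int (h : Hyp f g p c W P) {x : ℝ} (hx : x ∈ Set.Ioo (0:ℝ) 1) :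
    IntervalIntegrable (fun y => (p x - p y) * cot (f x - f y)) volume 0 1 := by
  rw [intervalIntegrable_iff_integrableOn_Ioo_of_le zero_le_one]
  have := h.hf.measurable; have := h.hp.measurable
  have q : Measurable (fun y => (p x - p y) * cot (f x - f y)) := by
      simp only [Real.cot_eq_cos_div_sin]
      fun_prop
  refine Integrable.mono' (sg_int.const_mul (P / kap c * sg x)) q.aestronglyMeasurable ?_
  filter_upwards [ae_mem] with y hy
  exact h.rem_le hx hy (cot_le _)

lemma pv_piece (h : Hyp f g p c W P) {x a b : ℝ} (hx : x ∈ Set.Ioo (0:ℝ) 1) (ha : 0 ≤ a) (hab : a ≤ b)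
    (hb : b ≤ 1) (hn : x ∉ Set.Icc a b) :
    (∫ y in a..b, cot (f x - f y)) * p x =
      Real.log |sin (f x - f a)| - Real.log |sin (f x - f b)| + ∫ y in a..b, (p x - p y) * cot (f x - f y) := by
  have hf := h.hf
  have hp := h.hp
  have hs : ∀ y ∈ Set.Icc a b, sin (f x - f y) ≠ 0 := fun y hy =>
    h.sin_ne0 hx ⟨ha.trans hy.1, hy.2.trans hb⟩ (fun e => hn (e ▸ hy))
  have cc : ContinuousOn (fun y => cot (f x - f y)) (Set.Icc a b) := by
    simp only [Real.cot_eq_cos_div_sin]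
    exact ContinuousOn.div (by fun_prop) (by fun_prop) hs
  have ii : ∀ q : ℝ → ℝ, Continuous q → IntervalIntegrable (fun y => q y * cot (f x - f y)) volume a b := by
    intro q hq
    apply ContinuousOn.intervalIntegrable
    rw [Set.uIcc_of_le hab]
    exact hq.continuousOn.mul cc
  have ftc := intervalIntegral.integral_eq_sub_of_hasDerivAt_of_le (a := a) (b := b)
    (f := fun y => Real.log |sin (f x - f y)|) (f' := fun y => (- p y) * cot (f x - f y)) hab
    (by
      apply ContinuousOn.log (by fun_prop)
      intro y hy
      exact abs_ne_zero.2 (hs y hy)) (fun y hy => by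
      have hy' : y ∈ Set.Ioo (0:ℝ) 1 := ⟨ha.trans_lt hy.1, hy.2.trans_le hb⟩
      have := (((h.hd y hy').const_sub (f x)).sin).log (hs y ⟨hy.1.le, hy.2.le⟩)
      simp only [Real.log_abs]
      refine this.congr_deriv ?_
      rw [Real.cot_eq_cos_div_sin]; ring) (ii _ (by fun_prop))
  rw [← intervalIntegral.integral_mul_const]
  rw [show Real.log |sin (f x - f a)| - Real.log |sin (f x - f b)| = -(∫ y in a..b, (- p y) * cot (f x - f y)) by rw [ftc]; ring]
  rw [← intervalIntegral.integral_neg, ← intervalIntegral.integral_add]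
  · congr 1; ext y; ring
  · exact (ii _ (by fun_prop)).neg
  · exact ii _ (by fun_prop)

lemma diag_tendsto (h : Hyp f g p c W P) {x : ℝ} (hx : x ∈ Set.Ioo (0:ℝ) 1) :
    Tendsto (fun δ => Real.log |sin (f x - f (x + δ))| - Real.log |sin (f x - f (x - δ))|) (𝓝[>] 0) (𝓝 0) := by
  have hpx := h.hpc x (Ioo_Icc hx)
  have hc := h.c0
  have hp0 : p x ≠ 0 := by intro q; linarith
  have d0 := h.hd x hx
  have key : ∀ s : ℝ, s ≠ 0 → Tendsto (fun δ => Real.log |δ⁻¹ * sin (f x - f (x + s * δ))|) (𝓝[>] 0)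
      (𝓝 (Real.log |s * p x|)) := by
    intro s hs
    have d1 : HasDerivAt (fun δ => x + s * δ) s 0 := by
      simpa using ((hasDerivAt_id (0:ℝ)).const_mul s).const_add x
    have d2 : HasDerivAt (fun δ => f (x + s * δ)) (p x * s) 0 := by
      have d0' : HasDerivAt f (p x) (x + s * 0) := by simpa using d0
      exact d0'.comp 0 d1
    have d3 := (d2.const_sub (f x)).sin
    have d4 := d3.tendsto_slope_zero
    have d5 := d4.mono_left (show 𝓝[>] (0:ℝ) ≤ 𝓝[≠] 0 from
      nhdsWithin_mono 0 (fun y (hy : 0 < y) => hy.ne'))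
    simp at d5
    have d6 := (d5.abs).log (by simp [hp0, hs])
    simpa [mul_comm, abs_mul] using d6
  have k1 := key 1 one_ne_zero
  have k2 := key (-1) (by norm_num)
  have k3 := k1.sub k2
  simp only [one_mul, neg_mul, abs_neg, sub_self, ← sub_eq_add_neg] at k3
  refine k3.congr' ?_
  have ev : ∀ᶠ δ in 𝓝[>] (0:ℝ), δ < min x (1 - x) :=
    eventually_nhdsWithin_of_eventually_nhds (gt_mem_nhds (lt_min hx.1 (by linarith [hx.2])))
  filter_upwards [self_mem_nhdsWithin, ev] with δ hδ hlt
  have hδ : 0 < δ := hδ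
  rw [lt_min_iff] at hlt
  have n1 := h.sin_ne0 hx (y := x + δ) ⟨by linarith [hx.1], by linarith⟩ (by linarith)
  have n2 := h.sin_ne0 hx (y := x - δ) ⟨by linarith [hx.1], by linarith [hx.2]⟩ (by linarith)
  rw [abs_mul, abs_mul, Real.log_mul (by positivity) (abs_ne_zero.2 n1), Real.log_mul (by positivity) (abs_ne_zero.2 n2)]
  ring

lemma pv_tendsto (h : Hyp f g p c W P) {x : ℝ} (hx : x ∈ Set.Ioo (0:ℝ) 1) :
    Tendsto (fun δ => (∫ y in (0:ℝ)..(x - δ), cot (f x - f y)) + ∫ y in (x + δ)..1, cot (f x - f y))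
      (𝓝[>] 0) (𝓝 (A f p x)) := by
  have hpx := h.hpc x (Ioo_Icc hx)
  have hc := h.c0
  have hp0 : p x ≠ 0 := by intro q; linarith
  have hR := h.R_int hx
  set R := fun y => (p x - p y) * cot (f x - f y) with hRdef
  have cR : ContinuousAt (fun b => ∫ y in (0:ℝ)..b, R y) x := by
    have := intervalIntegral.continuousOn_primitive_interval' hR (a := 0) (by simp)
    rw [Set.uIcc_of_le zero_le_one] at this
    exact this.continuousAt (Icc_mem_nhds hx.1 hx.2)
  have t1 : Tendsto (fun δ : ℝ => x - δ) (𝓝[>] 0) (𝓝 x) := by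
    apply tendsto_nhdsWithin_of_tendsto_nhds
    exact (by fun_prop : Continuous fun δ : ℝ => x - δ).tendsto' 0 x (by simp)
  have t2 : Tendsto (fun δ : ℝ => x + δ) (𝓝[>] 0) (𝓝 x) := by
    apply tendsto_nhdsWithin_of_tendsto_nhds
    exact (by fun_prop : Continuous fun δ : ℝ => x + δ).tendsto' 0 x (by simp)
  have l1 := cR.tendsto.comp t1
  have l2 := cR.tendsto.comp t2
  have l3 := ((((l1.sub l2).add_const (∫ y in (0:ℝ)..1, R y)).add (h.diag_tendsto hx)).add_const
    (Real.log |sin (f x - f 0)| - Real.log |sin (f x - f 1)|)).div_const (p x)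
  have e : A f p x = ((∫ y in (0:ℝ)..x, R y) - (∫ y in (0:ℝ)..x, R y) + (∫ y in (0:ℝ)..1, R y) + 0 +
      (Real.log |sin (f x - f 0)| - Real.log |sin (f x - f 1)|)) / p x := by
    unfold A
    rw [int01]; simp only [hRdef]; ring
  rw [e]
  refine l3.congr' ?_
  have ev : ∀ᶠ δ in 𝓝[>] (0:ℝ), δ < min x (1 - x) :=
    eventually_nhdsWithin_of_eventually_nhds (gt_mem_nhds (lt_min hx.1 (by linarith [hx.2])))
  filter_upwards [self_mem_nhdsWithin, ev] with δ hδ hlt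
  have hδ : 0 < δ := hδ
  rw [lt_min_iff] at hlt
  rw [div_eq_iff hp0, add_mul]
  rw [h.pv_piece hx le_rfl (by linarith) (by linarith [hx.2]) (fun q => by linarith [q.2]),
    h.pv_piece hx (by linarith [hx.1]) (by linarith) le_rfl (fun q => by linarith [q.1])]
  have hadd := intervalIntegral.integral_add_adjacent_intervals
    (hR.mono_set (c := 0) (d := x + δ) (by
      rw [Set.uIcc_of_le zero_le_one, Set.uIcc_of_le (by linarith [hx.1])]
      exact Set.Icc_subset_Icc le_rfl (by linarith)))
    (hR.mono_set (c := x + δ) (d := 1) (by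
      rw [Set.uIcc_of_le zero_le_one, Set.uIcc_of_le (by linarith [hx.1])]
      exact Set.Icc_subset_Icc (by linarith [hx.1]) le_rfl))
  rw [← hadd]
  simp only [Function.comp]
  ring

end Hyp

/-- clamp -/
noncomputable def cl (x : ℝ) : ℝ := max 0 (min 1 x)

lemma cl_mem (x : ℝ) : cl x ∈ Set.Icc (0:ℝ) 1 :=
  ⟨le_max_left _ _, max_le zero_le_one (min_le_left _ _)⟩

lemma cl_eq {x : ℝ} (hx : x ∈ Set.Icc (0:ℝ) 1) : cl x = x := by
  unfold cl; rw [min_eq_right hx.2, max_eq_right hx.1]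

lemma cl_cont : Continuous cl := by unfold cl; fun_prop

lemma lip_of_C1 {q : ℝ → ℝ} (hq : ContDiffOn ℝ 1 q (Set.Icc 0 1)) :
    ∃ K, 0 ≤ K ∧ ∀ x ∈ Set.Icc (0:ℝ) 1, ∀ y ∈ Set.Icc (0:ℝ) 1, |q x - q y| ≤ K * |x - y| := by
  have hu := uniqueDiffOn_Icc (zero_lt_one (α := ℝ))
  have hcd := hq.continuousOn_derivWithin hu le_rfl
  obtain ⟨K, hK⟩ := isCompact_Icc.exists_bound_of_continuousOn hcd
  refine ⟨K, (norm_nonneg _).trans (hK 0 (by simp)), fun x hx y hy => ?_⟩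
  exact (convex_Icc (0:ℝ) 1).norm_image_sub_le_of_norm_derivWithin_le
    (hq.differentiableOn one_ne_zero) hK hy hx

lemma mkHyp (L c : ℝ) (hL : 0 < L) (hc : 0 < c) (φ φtilde : ℝ → ℝ)
    (hφ : ContDiffOn ℝ 2 φ (Set.Icc 0 1))
    (hφ' : ∀ α ∈ Set.Icc (0:ℝ) 1, derivWithin φ (Set.Icc 0 1) α ≤ -c)
    (hrange : φ 0 - φ 1 ≤ L)
    (hφt : ContDiffOn ℝ 1 φtilde (Set.Icc 0 1)) :
    ∃ W P, Hyp (fun x => π / L * φ (cl x)) (fun x => π / L * φtilde (cl x))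
      (fun x => π / L * derivWithin φ (Set.Icc 0 1) (cl x)) (π / L * c) W P := by
  have hpi := Real.pi_pos
  have hu := uniqueDiffOn_Icc (zero_lt_one (α := ℝ))
  have hk : 0 < π / L := by positivity
  have hd1 : ContDiffOn ℝ 1 (derivWithin φ (Set.Icc 0 1)) (Set.Icc 0 1) :=
    hφ.derivWithin hu (by norm_num)
  have hdiff : DifferentiableOn ℝ φ (Set.Icc 0 1) := hφ.differentiableOn two_ne_zero
  have hda : ∀ x ∈ Set.Ioo (0:ℝ) 1, HasDerivAt φ (derivWithin φ (Set.Icc 0 1) x) x := fun x hx =>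
    ((hdiff x ⟨hx.1.le, hx.2.le⟩).hasDerivWithinAt).hasDerivAt (Icc_mem_nhds hx.1 hx.2)
  obtain ⟨W, hW0, hW⟩ := lip_of_C1 hφt
  obtain ⟨P, hP0, hP⟩ := lip_of_C1 hd1
  refine ⟨π / L * W, π / L * P, ?_, ?_, ?_, by positivity, by positivity, by positivity, ?_, ?_, ?_, ?_, ?_, ?_⟩
  · exact (hφ.continuousOn.comp_continuous cl_cont cl_mem).const_mul _
  · exact (hφt.continuousOn.comp_continuous cl_cont cl_mem).const_mul _
  · exact (hd1.continuousOn.comp_continuous cl_cont cl_mem).const_mul _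
  · intro x hx y hy hxy
    have := (convex_Icc (0:ℝ) 1).image_sub_le_mul_sub_of_deriv_le hφ.continuousOn
      (hdiff.mono interior_subset) (C := -c) (fun z hz => by
        rw [interior_Icc] at hz
        rw [(hda z hz).deriv]
        exact hφ' z ⟨hz.1.le, hz.2.le⟩) x hx y hy hxy
    simp only [cl_eq hx, cl_eq hy]
    rw [← mul_sub, mul_assoc]
    gcongr
    linarith
  · simp only [cl_eq (show (0:ℝ) ∈ Set.Icc (0:ℝ) 1 by simp), cl_eq (show (1:ℝ) ∈ Set.Icc (0:ℝ) 1 by simp)]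
    rw [← mul_sub]
    calc _ ≤ π / L * L := by gcongr
      _ = π := div_mul_cancel₀ _ hL.ne'
  · intro x hx y hy
    simp only [cl_eq hx, cl_eq hy]
    rw [← mul_sub, abs_mul, abs_of_pos hk, mul_assoc]
    gcongr
    exact hW x hx y hy
  · intro x hx y hy
    simp only [cl_eq hx, cl_eq hy]
    rw [← mul_sub, abs_mul, abs_of_pos hk, mul_assoc]
    gcongr
    exact hP x hx y hy
  · intro x hx
    have hx' : x ∈ Set.Icc (0:ℝ) 1 := ⟨hx.1.le, hx.2.le⟩
    simp only [cl_eq hx']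
    refine ((hda x hx).const_mul (π / L)).congr_of_eventuallyEq ?_
    filter_upwards [Icc_mem_nhds hx.1 hx.2] with y hy
    rw [cl_eq hy]
  · intro x hx
    simp only [cl_eq hx]
    rw [← mul_neg]
    gcongr
    exact hφ' x hx

end PVE

/-- For `φ ∈ C²([0,1])` with `φ′ ≤ −c < 0` and `φ(0) − φ(1) ≤ L`, and
`φ̃ ∈ C¹([0,1])`, the map `ε ↦ E⁰_φ(φ + ε φ̃)` is differentiable at `ε = 0`, the
principal-value limits exist for every `α ∈ (0,1)`, and the derivative is
`∫₀¹ (PV-limit)(α) · φ̃(α) dα`. -/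
theorem stmt_3 (L c : ℝ) (hL : 0 < L) (hc : 0 < c) (φ φtilde : ℝ → ℝ)
    (hφ : ContDiffOn ℝ 2 φ (Set.Icc 0 1))
    (hφ' : ∀ α ∈ Set.Icc (0:ℝ) 1, derivWithin φ (Set.Icc 0 1) α ≤ -c)
    (hrange : φ 0 - φ 1 ≤ L)
    (hφt : ContDiffOn ℝ 1 φtilde (Set.Icc 0 1)) :
    ∃ pv : ℝ → ℝ,
      (∀ α ∈ Set.Ioo (0:ℝ) 1,
        Tendsto (fun δ : ℝ =>
            (∫ β in (0:ℝ)..(α - δ), (2 * π / L) * Real.cot (π * (φ α - φ β) / L))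
            + ∫ β in (α + δ)..1, (2 * π / L) * Real.cot (π * (φ α - φ β) / L))
          (𝓝[>] (0:ℝ)) (𝓝 (pv α))) ∧
      HasDerivAt (fun ε : ℝ => E0phi L (fun α => φ α + ε * φtilde α))
        (∫ α in (0:ℝ)..1, pv α * φtilde α) 0 := by
  classical
  obtain ⟨W, P, h⟩ := PVE.mkHyp L c hL hc φ φtilde hφ hφ' hrange hφt
  have hcl : ∀ x ∈ Set.Ioo (0:ℝ) 1, PVE.cl x = x := fun x hx => PVE.cl_eq ⟨hx.1.le, hx.2.le⟩
  refine ⟨fun x => 2 * π / L * PVE.Hyp.A (fun x => π / L * φ (PVE.cl x))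
    (fun x => π / L * derivWithin φ (Set.Icc 0 1) (PVE.cl x)) x, ?_, ?_⟩
  · intro x hx
    refine ((h.pv_tendsto hx).const_mul (2 * π / L)).congr' ?_
    have ev : ∀ᶠ δ in 𝓝[>] (0:ℝ), δ < min x (1 - x) :=
      eventually_nhdsWithin_of_eventually_nhds (gt_mem_nhds (lt_min hx.1 (by linarith [hx.2])))
    filter_upwards [self_mem_nhdsWithin, ev] with δ hδ hlt
    have hδ : 0 < δ := hδ
    rw [lt_min_iff] at hlt
    rw [intervalIntegral.integral_const_mul, intervalIntegral.integral_const_mul, ← mul_add]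
    congr 2
    · apply intervalIntegral.integral_congr
      intro y hy
      rw [Set.uIcc_of_le (by linarith)] at hy
      simp only [hcl x hx, PVE.cl_eq (show y ∈ Set.Icc (0:ℝ) 1 from ⟨hy.1, by linarith [hy.2, hx.2]⟩)]
      congr 1; ring
    · apply intervalIntegral.integral_congr
      intro y hy
      rw [Set.uIcc_of_le (by linarith)] at hy
      simp only [hcl x hx, PVE.cl_eq (show y ∈ Set.Icc (0:ℝ) 1 from ⟨by linarith [hy.1, hx.1], hy.2⟩)]
      congr 1; ring
  · have h1 := h.main_deriv
    rw [h.main_eq] at h1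
    convert h1 using 1
    · ext e
      unfold E0phi
      rw [PVE.int01]
      apply integral_congr_ae
      filter_upwards [PVE.ae_mem] with y hy
      rw [PVE.int01]
      apply integral_congr_ae
      filter_upwards [PVE.ae_mem] with x hx
      simp only [PVE.Hyp.Lg, PVE.Hyp.U, hcl x hx, hcl y hy]
      congr 3; ring
    · rw [PVE.int01, ← integral_const_mul]
      apply integral_congr_ae
      filter_upwards [PVE.ae_mem] with x hx
      simp only [hcl x hx]
      ring
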